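/- Let M be a finitely generated inverse permutable monoid. Then 𝔏_Rat(M) equals the class of regular languages if and only if every finitely generated subgroup of M is periodic. -/

import Mathlib

open scoped Pointwise

/-- A semigroup/monoid `M` is `n`-permutable: for every sequence of `n` elements there is a
non-identity permutation `σ` of `{1,…,n}` leaving the product unchanged. -/
def NPermutable (M : Type) [Monoid M] (n : ℕ) : Prop :=
  ∀ s : Fin n → M, ∃ σ : Equiv.Perm (Fin n), σ ≠ 1 ∧
    (List.ofFn s).prod = (List.ofFn fun i => s (σ i)).prod

/-- `M` is permutable if it is `n`-permutable for some `n ≥ 2`. -/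
def Permutable (M : Type) [Monoid M] : Prop :=
  ∃ n : ℕ, 2 ≤ n ∧ NPermutable M n

/-- `M` is an inverse monoid: every element has a unique inverse in the sense of
inverse semigroup theory. -/
def IsInverseMonoid (M : Type) [Monoid M] : Prop :=
  ∀ m : M, ∃! m' : M, m * m' * m = m ∧ m' * m * m' = m'

/-- The rational subsets of a monoid: the closure of the finite subsets under
union, (pointwise) product and Kleene star (i.e. generated submonoid). -/
inductive IsRatSet {M : Type} [Monoid M] : Set M → Prop
  | of_finite (S : Set M) : S.Finite → IsRatSet S
  | union (S T : Set M) : IsRatSet S → IsRatSet T → IsRatSet (S ∪ T)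
  | mul (S T : Set M) : IsRatSet S → IsRatSet T → IsRatSet (S * T)
  | star (S : Set M) : IsRatSet S → IsRatSet (Submonoid.closure S : Set M)

/-- A rational monoid automaton over `M` with input alphabet `α`: a nondeterministic
finite automaton whose transitions (on letters or on `ε`, encoded by `none`) are labeled
by elements of `M`, together with rational initial and terminal sets `I0, I1 ⊆ M`. -/
structure RatMonoidAutomaton (α : Type) (M : Type) [Monoid M] where
  Q : Type
  fintypeQ : Fintype Q
  start : Q
  accept : Set Q
  step : Q → Option α → Set (Q × M)
  I0 : Set M
  I1 : Set M
  ratI0 : IsRatSet I0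
  ratI1 : IsRatSet I1

namespace RatMonoidAutomaton

variable {α M : Type} [Monoid M]

/-- `A.Reaches q w m q'` holds if there is a computation of `A` from state `q` to state `q'`
reading the word `w` (with `ε`-moves allowed) whose product of labels is `m`. -/
inductive Reaches (A : RatMonoidAutomaton α M) : A.Q → List α → M → A.Q → Prop
  | refl (q : A.Q) : Reaches A q [] 1 q
  | letter {q q' q'' : A.Q} {a : α} {w : List α} {m m' : M} :
      (q', m) ∈ A.step q (some a) → Reaches A q' w m' q'' →
      Reaches A q (a :: w) (m * m') q''
  | eps {q q' q'' : A.Q} {w : List α} {m m' : M} :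
      (q', m) ∈ A.step q none → Reaches A q' w m' q'' →
      Reaches A q w (m * m') q''

/-- The language accepted by a rational monoid automaton: `w` is accepted if some
computation on `w` from the initial state to an accepting state has label product `x`
with `x₀ * x ∈ I1` for some `x₀ ∈ I0`. -/
def lang (A : RatMonoidAutomaton α M) : Language α :=
  { w | ∃ q ∈ A.accept, ∃ m : M, A.Reaches A.start w m q ∧ ∃ x0 ∈ A.I0, x0 * m ∈ A.I1 }

end RatMonoidAutomaton

/-- `𝔏_Rat(M)`: the family of languages over the alphabet `α` accepted by rational
monoid automata over `M`. -/
def LRat (α : Type) (M : Type) [Monoid M] : Set (Language α) :=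
  { L | ∃ A : RatMonoidAutomaton α M, A.lang = L }

/-- A subsemigroup `S` of a monoid `M` is a subgroup of `M` if it is a group under the
induced operation (its identity need not be the identity of `M`). -/
def IsSubgroupOfMonoid {M : Type} [Monoid M] (S : Subsemigroup M) : Prop :=
  ∃ e ∈ S, (∀ x ∈ S, e * x = x ∧ x * e = x) ∧ ∀ x ∈ S, ∃ y ∈ S, x * y = e ∧ y * x = e

/-- A subsemigroup is finitely generated if it is the closure of a finite subset. -/
def SubsemigroupFG {M : Type} [Monoid M] (S : Subsemigroup M) : Prop :=
  ∃ T : Finset M, Subsemigroup.closure (T : Set M) = S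

/-- An element `s` is periodic if `s^i = s^j` for some `1 ≤ i < j`. -/
def IsPeriodicElem {M : Type} [Monoid M] (s : M) : Prop :=
  ∃ i j : ℕ, 1 ≤ i ∧ i < j ∧ s ^ i = s ^ j

/-! A finite monoid recognizes only regular languages, because the left quotient of a language by a
word depends only on the set of pairs (state, label product) which the word can reach. Conversely
the language of the word problem of a cyclic subgroup `⟨x⟩` has at least as many left quotients as
there are powers of `x`. It remains to show that `M` is finite when its subgroups are periodic.

Permutability applied to the sequence `y ^ i * x ^ (i + 1)`, with `y` the inverse of `x`, forces
`x ^ n` into a subgroup of `M`, so every element of `M` is periodic. By a theorem of Restivo and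
Reutenauer a finitely generated periodic permutable monoid is finite: otherwise some infinite word
has only shortlex-minimal factors; it can be chosen recurrent and lexicographically least among its
shifts (a least point of a minimal subshift). If it is purely periodic, periodicity of an element
shortens one of its prefixes, and if not, it has a factor `u₁ ⋯ uₙ` all of whose nontrivial
rearrangements are lexicographically smaller, one of them being equal to it in `M`. -/

/-! ### Products along a permutation -/

theorem exists_ofFn_comp_perm_eq_append {β : Type*} {n : ℕ} (f : Fin n → β)
    {σ : Equiv.Perm (Fin n)} (hσ : σ ≠ 1) :
    ∃ j, j < σ j ∧ ∃ r, List.ofFn (fun i => f (σ i)) = (List.ofFn f).take j ++ f (σ j) :: r := by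
  have hmoved : ∃ i, σ i ≠ i := not_forall.1 fun h => hσ (Equiv.ext h)
  obtain ⟨j, hj, hmin⟩ := wellFounded_lt.has_min {j | σ j ≠ j} hmoved
  have hfix : ∀ i < j, σ i = i := fun i hi => not_not.1 fun h => hmin i h hi
  have hlt : j < σ j :=
    lt_of_le_of_ne (not_lt.1 fun h => hj (σ.injective (hfix _ h))) (Ne.symm hj)
  have htake : (List.ofFn fun i => f (σ i)).take j = (List.ofFn f).take j := by
    refine List.ext_getElem (by simp) fun k hk _ => ?_
    have hkj : k < j := by simp only [List.length_take, List.length_ofFn] at hk; omega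
    simp only [List.getElem_take, List.getElem_ofFn]
    rw [hfix ⟨k, hkj.trans j.2⟩ hkj]
  refine ⟨j, hlt, (List.ofFn fun i => f (σ i)).drop (j + 1), ?_⟩
  rw [← htake]
  conv_lhs =>
    rw [← List.take_append_drop j (List.ofFn fun i => f (σ i)),
      ← List.getElem_cons_drop (by simp), List.getElem_ofFn]

/-! ### Inverse monoids -/

section InverseMonoid

variable {M : Type} [Monoid M] {x y e f : M} {n : ℕ}

/-- `y` is an inverse of `x` in the sense of inverse semigroup theory; this is the relation whose
unique solvability in `y` defines `IsInverseMonoid`. -/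
def IsInverse (x y : M) : Prop :=
  x * y * x = x ∧ y * x * y = y

theorem IsInverse.symm (h : IsInverse x y) : IsInverse y x :=
  And.symm h

theorem IsInverse.isIdempotentElem_mul (h : IsInverse x y) : IsIdempotentElem (x * y) := by
  rw [IsIdempotentElem, ← mul_assoc, h.1]

theorem IsInverse.of_isIdempotentElem (he : IsIdempotentElem e) : IsInverse e e := by
  simp only [IsInverse, he.eq, and_self]

theorem IsInverseMonoid.isIdempotentElem_mul (hM : IsInverseMonoid M) (he : IsIdempotentElem e)
    (hf : IsIdempotentElem f) : IsIdempotentElem (e * f) := by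
  obtain ⟨g, hg : IsInverse (e * f) g, hg_unique⟩ := hM (e * f)
  have hfge : IsInverse (e * f) (f * g * e) := by
    constructor
    · calc e * f * (f * g * e) * (e * f) = e * (f * f) * g * (e * e) * f := by
            simp only [mul_assoc]
        _ = e * f * g * (e * f) := by rw [he.eq, hf.eq]; simp only [mul_assoc]
        _ = e * f := hg.1
    · calc f * g * e * (e * f) * (f * g * e) = f * (g * (e * e * (f * f)) * g) * e := by
            simp only [mul_assoc]
        _ = f * g * e := by rw [he.eq, hf.eq, hg.2]
  have hg_eq : f * g * e = g := hg_unique _ hfge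
  have hg_idem : IsIdempotentElem g :=
    calc g * g = f * g * e * (f * g * e) := by rw [hg_eq]
      _ = f * (g * (e * f) * g) * e := by simp only [mul_assoc]
      _ = g := by rw [hg.2, hg_eq]
  rwa [(hM g).unique hg.symm (IsInverse.of_isIdempotentElem hg_idem)]

theorem IsInverseMonoid.commute_of_isIdempotentElem (hM : IsInverseMonoid M)
    (he : IsIdempotentElem e) (hf : IsIdempotentElem f) : Commute e f := by
  have isInverse_comm : ∀ {a b : M}, IsIdempotentElem a → IsIdempotentElem b →
      a * b * (b * a) * (a * b) = a * b := fun {a b} ha hb =>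
    calc a * b * (b * a) * (a * b) = a * (b * b) * (a * a) * b := by simp only [mul_assoc]
      _ = a * b * (a * b) := by rw [ha.eq, hb.eq]; simp only [mul_assoc]
      _ = a * b := hM.isIdempotentElem_mul ha hb
  exact (hM (e * f)).unique (IsInverse.of_isIdempotentElem (hM.isIdempotentElem_mul he hf))
    ⟨isInverse_comm he hf, isInverse_comm hf he⟩

theorem IsInverseMonoid.isInverse_pow (hM : IsInverseMonoid M) (h : IsInverse x y) (n : ℕ) :
    IsInverse (x ^ n) (y ^ n) := by
  have pow_mul_pow_mul_pow : ∀ {a b : M}, IsInverse a b → ∀ n, a ^ n * b ^ n * a ^ n = a ^ n ∧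
      b ^ n * a ^ n * b ^ n = b ^ n → a ^ (n + 1) * b ^ (n + 1) * a ^ (n + 1) = a ^ (n + 1) := by
    intro a b hab n ih
    have hcomm := hM.commute_of_isIdempotentElem (IsInverse.isIdempotentElem_mul ih)
      hab.symm.isIdempotentElem_mul
    calc a ^ (n + 1) * b ^ (n + 1) * a ^ (n + 1) = a * (a ^ n * b ^ n * (b * a)) * a ^ n := by
          rw [pow_succ' a, pow_succ b]; simp only [mul_assoc]
      _ = a * b * a * (a ^ n * b ^ n * a ^ n) := by rw [hcomm.eq]; simp only [mul_assoc]
      _ = a ^ (n + 1) := by rw [hab.1, ih.1, pow_succ']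
  induction n with
  | zero => simp [IsInverse]
  | succ n ih =>
    exact ⟨pow_mul_pow_mul_pow h n ih, pow_mul_pow_mul_pow h.symm n ih.symm⟩

theorem IsInverseMonoid.mul_mul_pow_mul_pow_of_lt (hM : IsInverseMonoid M) (h : IsInverse x y)
    {j k : ℕ} (hjk : j < k) : y * x * (x ^ j * y ^ k) = x ^ j * y ^ k := by
  obtain ⟨d, rfl⟩ := Nat.exists_eq_add_of_lt hjk
  have hcomm := hM.commute_of_isIdempotentElem h.symm.isIdempotentElem_mul
    (hM.isInverse_pow h j).isIdempotentElem_mul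
  rw [add_assoc, pow_add y, pow_succ' y d]
  calc y * x * (x ^ j * (y ^ j * (y * y ^ d))) = y * x * (x ^ j * y ^ j) * y * y ^ d := by
        simp only [mul_assoc]
    _ = x ^ j * y ^ j * (y * x * y) * y ^ d := by rw [hcomm.eq]; simp only [mul_assoc]
    _ = x ^ j * (y ^ j * (y * y ^ d)) := by rw [h.2]; simp only [mul_assoc]

theorem IsInverseMonoid.prod_map_range_pow_mul_pow_succ (hM : IsInverseMonoid M)
    (h : IsInverse x y) (n : ℕ) :
    ((List.range n).map fun i => y ^ i * x ^ (i + 1)).prod = x ^ n := by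
  induction n with
  | zero => simp
  | succ n ih =>
    rw [List.range_succ, List.map_append, List.prod_append, ih, List.map_singleton,
      List.prod_singleton, pow_succ, ← mul_assoc, ← mul_assoc, (hM.isInverse_pow h n).1]

theorem IsInverseMonoid.mul_mul_pow_of_nPermutable (hM : IsInverseMonoid M) (h : IsInverse x y)
    (hn : NPermutable M n) : y * x * x ^ n = x ^ n := by
  let s : ℕ → M := fun i => y ^ i * x ^ (i + 1)
  have hs : List.ofFn (fun i : Fin n => s i) = (List.range n).map s := by
    rw [List.ofFn_eq_map, ← List.map_coe_finRange_eq_range, List.map_map]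
    rfl
  obtain ⟨σ, hσ, hprod⟩ := hn fun i => s i
  obtain ⟨j, hj, r, hr⟩ := exists_ofFn_comp_perm_eq_append (fun i : Fin n => s i) hσ
  have hx : x ^ n = x ^ (j : ℕ) * y ^ (σ j : ℕ) * (x ^ ((σ j : ℕ) + 1) * r.prod) := by
    rw [hr, hs, ← List.map_take, List.take_range, min_eq_left j.2.le, List.prod_append,
      List.prod_cons, hM.prod_map_range_pow_mul_pow_succ h,
      hM.prod_map_range_pow_mul_pow_succ h] at hprod
    simpa only [s, mul_assoc] using hprod
  rw [hx, ← mul_assoc, hM.mul_mul_pow_mul_pow_of_lt h hj]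

theorem pow_mul_pow_mul_of_mul_mul_eq {a : M} (ha : y * x * a = a) (hxa : Commute x a) (m : ℕ) :
    y ^ m * x ^ m * a = a := by
  induction m with
  | zero => simp
  | succ m ih =>
    calc y ^ (m + 1) * x ^ (m + 1) * a = y ^ m * (y * x * (x ^ m * a)) := by
          rw [pow_succ y, pow_succ' x]; simp only [mul_assoc]
      _ = y ^ m * (y * x * a * x ^ m) := by
          rw [(hxa.pow_left m).eq, mul_assoc (y * x)]
      _ = a := by rw [ha, ← (hxa.pow_left m).eq, ← mul_assoc, ih]

theorem IsInverseMonoid.commute_pow_of_nPermutable (hM : IsInverseMonoid M) (h : IsInverse x y)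
    (hn : NPermutable M n) : Commute (x ^ n) (y ^ n) := by
  have hyx : y ^ n * x ^ n * x ^ n = x ^ n :=
    pow_mul_pow_mul_of_mul_mul_eq (hM.mul_mul_pow_of_nPermutable h hn)
      ((Commute.refl x).pow_right n) n
  have hxy : x ^ n * y ^ n * y ^ n = y ^ n :=
    pow_mul_pow_mul_of_mul_mul_eq (hM.mul_mul_pow_of_nPermutable h.symm hn)
      ((Commute.refl y).pow_right n) n
  have hinv := hM.isInverse_pow h n
  calc x ^ n * y ^ n = y ^ n * x ^ n * x ^ n * y ^ n := by rw [hyx]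
    _ = y ^ n * x ^ n * (x ^ n * y ^ n) := by rw [mul_assoc]
    _ = x ^ n * y ^ n * (y ^ n * x ^ n) := hM.commute_of_isIdempotentElem
        hinv.symm.isIdempotentElem_mul hinv.isIdempotentElem_mul
    _ = y ^ n * x ^ n := by rw [← mul_assoc, hxy]

theorem isSubgroupOfMonoid_closure {T : Set M} (heT : e ∈ Subsemigroup.closure T)
    (he : ∀ a ∈ T, e * a = a ∧ a * e = a) (hinv : ∀ a ∈ T, ∃ b ∈ T, a * b = e ∧ b * a = e) :
    IsSubgroupOfMonoid (Subsemigroup.closure T) := by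
  have hid : ∀ a ∈ Subsemigroup.closure T, e * a = a ∧ a * e = a := by
    intro a ha
    induction ha using Subsemigroup.closure_induction with
    | mem a ha => exact he a ha
    | mul a b _ _ iha ihb => exact ⟨by rw [← mul_assoc, iha.1], by rw [mul_assoc, ihb.2]⟩
  refine ⟨e, heT, hid, fun a ha => ?_⟩
  induction ha using Subsemigroup.closure_induction with
  | mem a ha =>
    obtain ⟨b, hb, hab⟩ := hinv a ha
    exact ⟨b, Subsemigroup.subset_closure hb, hab⟩
  | mul a b ha _ iha ihb =>
    obtain ⟨a', ha', haa', ha'a⟩ := iha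
    obtain ⟨b', hb', hbb', hb'b⟩ := ihb
    refine ⟨b' * a', mul_mem hb' ha', ?_, ?_⟩
    · calc a * b * (b' * a') = a * (b * b') * a' := by simp only [mul_assoc]
        _ = e := by rw [hbb', (hid a ha).2, haa']
    · calc b' * a' * (a * b) = b' * (a' * a) * b := by simp only [mul_assoc]
        _ = e := by rw [ha'a, (hid b' hb').2, hb'b]

theorem IsInverse.isSubgroupOfMonoid_closure_pair (h : IsInverse x y) (hxy : Commute x y) :
    IsSubgroupOfMonoid (Subsemigroup.closure {x, y}) := by
  refine isSubgroupOfMonoid_closure (e := x * y) ?_ ?_ ?_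
  · exact mul_mem (Subsemigroup.subset_closure (by simp)) (Subsemigroup.subset_closure (by simp))
  · rintro a (rfl | rfl)
    · exact ⟨h.1, by rw [hxy.eq, ← mul_assoc, h.1]⟩
    · exact ⟨by rw [hxy.eq, h.2], by rw [← mul_assoc, h.2]⟩
  · rintro a (rfl | rfl)
    · exact ⟨y, by simp, rfl, hxy.symm⟩
    · exact ⟨x, by simp, hxy.symm, rfl⟩

theorem IsPeriodicElem.of_pow (hn : 0 < n) (h : IsPeriodicElem (x ^ n)) : IsPeriodicElem x := by
  obtain ⟨i, j, hi, hij, hpow⟩ := h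
  exact ⟨n * i, n * j, Nat.mul_pos hn hi, Nat.mul_lt_mul_of_pos_left hij hn,
    by rw [pow_mul, pow_mul, hpow]⟩

theorem IsInverseMonoid.isPeriodicElem_of_permutable (hM : IsInverseMonoid M)
    (hperm : Permutable M)
    (hper : ∀ S : Subsemigroup M, IsSubgroupOfMonoid S → SubsemigroupFG S →
      ∀ x ∈ S, IsPeriodicElem x) (x : M) : IsPeriodicElem x := by
  classical
  obtain ⟨n, hn2, hn⟩ := hperm
  obtain ⟨y, hxy : IsInverse x y, -⟩ := hM x
  have hgroup := (hM.isInverse_pow hxy n).isSubgroupOfMonoid_closure_pair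
    (hM.commute_pow_of_nPermutable hxy hn)
  exact .of_pow (n := n) (zero_lt_two.trans_le hn2) (hper _ hgroup ⟨{x ^ n, y ^ n}, by simp⟩ _
    (Subsemigroup.subset_closure (by simp)))

end InverseMonoid

/-! ### Rational monoid automata -/

section Automata

variable {α M : Type} [Monoid M]

namespace RatMonoidAutomaton

variable {A : RatMonoidAutomaton α M} {q q' : A.Q} {u v w : List α} {m : M}

theorem Reaches.append {r : A.Q} {m' : M} (h : A.Reaches q u m r) (h' : A.Reaches r v m' q') :
    A.Reaches q (u ++ v) (m * m') q' := by
  induction h with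
  | refl q => rwa [List.nil_append, one_mul]
  | letter hs _ ih =>
    rw [mul_assoc]
    exact .letter hs (ih h')
  | eps hs _ ih =>
    rw [mul_assoc]
    exact .eps hs (ih h')

theorem Reaches.exists_of_append (h : A.Reaches q (u ++ v) m q') :
    ∃ r m₁ m₂, A.Reaches q u m₁ r ∧ A.Reaches r v m₂ q' ∧ m₁ * m₂ = m := by
  generalize huv : u ++ v = w at h
  induction h generalizing u with
  | refl q =>
    obtain ⟨rfl, rfl⟩ := List.append_eq_nil_iff.1 huv
    exact ⟨q, 1, 1, .refl q, .refl q, one_mul 1⟩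
  | @letter q _ _ a w _ _ hs hr ih =>
    obtain ⟨rfl, rfl⟩ | ⟨u, rfl, rfl⟩ := List.append_eq_cons_iff.1 huv
    · exact ⟨q, 1, _, .refl q, .letter hs hr, one_mul _⟩
    · obtain ⟨r, m₁, m₂, hu, hv, rfl⟩ := ih rfl
      exact ⟨r, _, m₂, .letter hs hu, hv, mul_assoc ..⟩
  | eps hs _ ih =>
    obtain ⟨r, m₁, m₂, hu, hv, rfl⟩ := ih huv
    exact ⟨r, _, m₂, .eps hs hu, hv, mul_assoc ..⟩

theorem reaches_append_iff : A.Reaches q (u ++ v) m q' ↔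
    ∃ r m₁ m₂, A.Reaches q u m₁ r ∧ A.Reaches r v m₂ q' ∧ m₁ * m₂ = m := by
  refine ⟨Reaches.exists_of_append, ?_⟩
  rintro ⟨r, m₁, m₂, hu, hv, rfl⟩
  exact hu.append hv

theorem isRegular_lang [Finite M] (A : RatMonoidAutomaton α M) : A.lang.IsRegular := by
  have := A.fintypeQ
  let reachable : List α → Set (A.Q × M) := fun u => {p | A.Reaches A.start u p.2 p.1}
  have hquot : ∀ u u', reachable u = reachable u' →
      A.lang.leftQuotient u ≤ A.lang.leftQuotient u' := by
    rintro u u' huu' v ⟨q, hq, m, hr, x₀, hx₀, hx₁⟩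
    obtain ⟨r, m₁, m₂, hu, hv, rfl⟩ := reaches_append_iff.1 hr
    have hu' : (r, m₁) ∈ reachable u' := huu' ▸ hu
    exact ⟨q, hq, _, hu'.append hv, x₀, hx₀, hx₁⟩
  refine .of_finite_range_leftQuotient ?_
  have hfactor : A.lang.leftQuotient.FactorsThrough reachable := fun u u' huu' =>
    le_antisymm (hquot u u' huu') (hquot u' u huu'.symm)
  rw [← hfactor.extend_comp ⊥]
  exact (Set.toFinite (Set.range (Function.extend reachable A.lang.leftQuotient ⊥))).subset
    (Set.range_comp_subset_range _ _)

/-- The automaton obtained from a DFA by labelling every transition on the letter `a` with `g a`,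
with initial set `{m₀}` and terminal set `{m₁}`. It imposes a word-problem condition in `M` on top
of acceptance by the DFA. -/
def ofDFA {σ : Type} [Fintype σ] (D : DFA α σ) (g : α → M) (m₀ m₁ : M) :
    RatMonoidAutomaton α M where
  Q := σ
  fintypeQ := inferInstance
  start := D.start
  accept := D.accept
  step q o := {p | ∃ a, o = some a ∧ p = (D.step q a, g a)}
  I0 := {m₀}
  I1 := {m₁}
  ratI0 := .of_finite _ (Set.finite_singleton m₀)
  ratI1 := .of_finite _ (Set.finite_singleton m₁)

variable {σ : Type} [Fintype σ] {D : DFA α σ} {g : α → M} {m₀ m₁ : M}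

theorem reaches_ofDFA_iff {p p' : (ofDFA D g m₀ m₁).Q} : (ofDFA D g m₀ m₁).Reaches p w m p' ↔
    p' = D.evalFrom p w ∧ m = (w.map g).prod := by
  constructor
  · intro h
    induction h with
    | refl => exact ⟨rfl, rfl⟩
    | letter hs _ ih =>
      obtain ⟨a, ha, hp⟩ := hs
      obtain ⟨rfl, rfl⟩ := Prod.mk.inj hp
      obtain rfl := Option.some.inj ha
      exact ⟨ih.1, by rw [ih.2, List.map_cons, List.prod_cons]⟩
    | eps hs =>
      obtain ⟨a, ha, -⟩ := hs
      exact absurd ha (Option.some_ne_none a).symm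
  · rintro ⟨rfl, rfl⟩
    induction w generalizing p with
    | nil => exact Reaches.refl (A := ofDFA D g m₀ m₁) p
    | cons a w ih =>
      rw [List.map_cons, List.prod_cons]
      exact Reaches.letter (A := ofDFA D g m₀ m₁) ⟨a, rfl, rfl⟩ ih

theorem mem_lang_ofDFA_iff :
    w ∈ (ofDFA D g m₀ m₁).lang ↔ w ∈ D.accepts ∧ m₀ * (w.map g).prod = m₁ := by
  constructor
  · rintro ⟨q, hq, m, hr, x₀, rfl, hx₁⟩
    obtain ⟨rfl, rfl⟩ := reaches_ofDFA_iff.1 hr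
    exact ⟨hq, hx₁⟩
  · rintro ⟨hw, hm⟩
    exact ⟨_, hw, _, reaches_ofDFA_iff.2 ⟨rfl, rfl⟩, m₀, rfl, hm⟩

end RatMonoidAutomaton

open RatMonoidAutomaton

theorem mem_LRat_of_isRegular {L : Language α} (hL : L.IsRegular) : L ∈ LRat α M := by
  obtain ⟨σ, _, D, rfl⟩ := hL
  refine ⟨ofDFA D (fun _ => 1) 1 1, Language.ext fun w => ?_⟩
  simp [mem_lang_ofDFA_iff]

theorem setOf_mul_prod_eq_mem_LRat (g : α → M) (m₀ m₁ : M) :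
    ({w | m₀ * (w.map g).prod = m₁} : Language α) ∈ LRat α M := by
  let D : DFA α Unit := ⟨fun _ _ => (), (), Set.univ⟩
  have hD : ∀ w, w ∈ D.accepts := fun _ => Set.mem_univ _
  refine ⟨ofDFA D g m₀ m₁, Language.ext fun w => ?_⟩
  exact mem_lang_ofDFA_iff.trans (and_iff_right (hD w))

theorem pow_succ_mul_pow_succ_eq {x y e : M} (hy : e * y = y) (hxy : x * y = e) (n : ℕ) :
    x ^ (n + 1) * y ^ (n + 1) = e := by
  induction n with
  | zero => simpa using hxy
  | succ n ih =>
    calc x ^ (n + 2) * y ^ (n + 2) = x ^ (n + 1) * (x * y * y) * y ^ n := by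
          rw [pow_succ x, pow_succ' y, pow_succ' y]; simp only [mul_assoc]
      _ = e := by rw [hxy, hy, mul_assoc, ← pow_succ', ih]

theorem IsSubgroupOfMonoid.isPeriodicElem_of_LRat_isRegular {S : Subsemigroup M}
    (hS : IsSubgroupOfMonoid S) (hreg : ∀ L ∈ LRat Bool M, L.IsRegular) {x : M} (hx : x ∈ S) :
    IsPeriodicElem x := by
  obtain ⟨e, -, hid, hinv⟩ := hS
  obtain ⟨y, hy, hxy, hyx⟩ := hinv x hx
  let g : Bool → M := fun b => bif b then x else y
  let L : Language Bool := {w | e * (w.map g).prod = e}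
  have hmem : ∀ i j, List.replicate (i + 1) false ∈
      L.leftQuotient (List.replicate (j + 1) true) ↔ x ^ (j + 1) * y ^ (i + 1) = e := by
    intro i j
    change e * _ = e ↔ _
    have hex : e * x ^ (j + 1) = x ^ (j + 1) := by rw [pow_succ', ← mul_assoc, (hid x hx).1]
    simp [g, ← mul_assoc, hex]
  have hfin := (hreg L (setOf_mul_prod_eq_mem_LRat g e e)).finite_range_leftQuotient
  obtain ⟨i, j, hij, hquot⟩ := hfin.exists_lt_map_eq_of_forall_mem
    (f := fun i => L.leftQuotient (List.replicate (i + 1) true)) fun i => Set.mem_range_self _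
  have hxiyi : x ^ (i + 1) * y ^ (i + 1) = e := pow_succ_mul_pow_succ_eq (hid y hy).1 hxy i
  have hyixi : y ^ (i + 1) * x ^ (i + 1) = e := pow_succ_mul_pow_succ_eq (hid x hx).1 hyx i
  have hxjyi : x ^ (j + 1) * y ^ (i + 1) = e := by
    rw [← hmem i j, ← hquot, hmem, hxiyi]
  refine ⟨i + 1, j + 1, by omega, by omega, ?_⟩
  calc x ^ (i + 1) = e * x ^ (i + 1) := by rw [pow_succ', ← mul_assoc, (hid x hx).1]
    _ = x ^ (j + 1) * (y ^ (i + 1) * x ^ (i + 1)) := by rw [← hxjyi, mul_assoc]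
    _ = x ^ (j + 1) := by rw [hyixi, pow_succ, mul_assoc, (hid x hx).2]

end Automata

/-! ### Minimal sets and least points of shifts -/

section MinimalSet

variable {X : Type*} [TopologicalSpace X] {f : X → X} {Y : Set X}

/-- `Y` is a minimal set of the dynamical system `f`: minimal among the nonempty closed sets which
`f` maps into themselves. -/
def IsMinimalSet (f : X → X) (Y : Set X) : Prop :=
  Minimal (fun Y => IsClosed Y ∧ Y.Nonempty ∧ Set.MapsTo f Y Y) Y

theorem exists_isMinimalSet_subset [CompactSpace X] {K : Set X} (hK : IsClosed K)
    (hne : K.Nonempty) (hf : Set.MapsTo f K K) : ∃ Y ⊆ K, IsMinimalSet f Y := by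
  refine zorn_superset_nonempty {Y | IsClosed Y ∧ Y.Nonempty ∧ Set.MapsTo f Y Y}
    (fun c hc hchain hcne => ?_) K ⟨hK, hne, hf⟩
  have := hcne.to_subtype
  have hchain' : IsChain (· ⊇ ·) c := hchain.symm
  refine ⟨⋂₀ c, ⟨isClosed_sInter fun Y hY => (hc hY).1, ?_, fun x hx Y hY =>
    (hc hY).2.2 (hx Y hY)⟩, fun Y hY => Set.sInter_subset_of_mem hY⟩
  exact IsCompact.nonempty_sInter_of_directed_nonempty_isCompact_isClosed
    hchain'.directedOn (fun Y hY => (hc hY).2.1) (fun Y hY => (hc hY).1.isCompact)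
    fun Y hY => (hc hY).1

theorem IsMinimalSet.exists_iterate_mem (hY : IsMinimalSet f Y) (hf : Continuous f) {y : X}
    (hy : y ∈ Y) {U : Set X} (hU : IsOpen U) (hYU : (Y ∩ U).Nonempty) : ∃ n, f^[n] y ∈ U := by
  by_contra! hyU
  let Z : Set X := {z ∈ Y | ∀ n, f^[n] z ∉ U}
  have hclosed : IsClosed {z | ∀ n, f^[n] z ∉ U} := by
    rw [Set.ofPred_forall]
    exact isClosed_iInter fun n => hU.isClosed_compl.preimage (hf.iterate n)
  have hZ : IsClosed Z ∧ Z.Nonempty ∧ Set.MapsTo f Z Z := by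
    refine ⟨hY.prop.1.inter hclosed, ⟨y, hy, hyU⟩, fun z hz => ⟨hY.prop.2.2 hz.1, fun n => ?_⟩⟩
    rw [← Function.iterate_succ_apply]
    exact hz.2 (n + 1)
  obtain ⟨z, hzY, hzU⟩ := hYU
  exact (hY.le_of_le hZ (Set.sep_subset _ _) hzY).2 0 hzU

theorem IsMinimalSet.frequently_iterate_mem (hY : IsMinimalSet f Y) (hf : Continuous f) {y : X}
    (hy : y ∈ Y) {U : Set X} (hU : IsOpen U) (hYU : (Y ∩ U).Nonempty) :
    ∃ᶠ n in Filter.atTop, f^[n] y ∈ U := by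
  refine Filter.frequently_atTop.2 fun m => ?_
  obtain ⟨n, hn⟩ := hY.exists_iterate_mem hf (hY.prop.2.2.iterate m hy) hU hYU
  exact ⟨n + m, Nat.le_add_left m n, by rwa [Function.iterate_add_apply]⟩

end MinimalSet

section Shift

open SymbolicDynamics.FullShift (shift shift_add shift_zero continuous_shift)
open PiNat (cylinder mem_cylinder_iff isOpen_cylinder self_mem_cylinder)

variable {A : Type*}

theorem shift_one_iterate (n : ℕ) :
    (shift 1 : (ℕ → A) → ℕ → A)^[n] = shift n := by
  induction n with
  | zero => exact funext fun s => (shift_zero s).symm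
  | succ n ih =>
    rw [Function.iterate_succ', ih]
    exact funext fun s => (shift_add n 1 s).symm

/-- The infinite word `s` is recurrent: each of its prefixes occurs at arbitrarily late
positions. -/
def IsRecurrent (s : ℕ → A) : Prop :=
  ∀ l, ∃ᶠ i in Filter.atTop, shift i s ∈ cylinder s l

theorem IsMinimalSet.isRecurrent [TopologicalSpace A] [DiscreteTopology A] {Y : Set (ℕ → A)}
    (hY : IsMinimalSet (shift 1) Y) {s : ℕ → A} (hs : s ∈ Y) : IsRecurrent s := fun l => by
  simpa only [shift_one_iterate] using hY.frequently_iterate_mem (continuous_shift 1) hs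
    (isOpen_cylinder (fun _ => A) s l) ⟨s, hs, self_mem_cylinder s l⟩

theorem lowerSemicontinuous_toLex [TopologicalSpace A] [DiscreteTopology A] [LinearOrder A] :
    LowerSemicontinuous (toLex : (ℕ → A) → Lex (ℕ → A)) := by
  rintro s t ⟨d, hagree, hlt⟩
  refine Filter.mem_of_superset ((isOpen_cylinder (fun _ => A) s (d + 1)).mem_nhds
    (self_mem_cylinder s (d + 1))) fun r hr => ⟨d, fun k hk => ?_, ?_⟩
  · exact (hagree k hk).trans (hr k (hk.trans d.lt_succ_self)).symm
  · exact hlt.trans_eq (hr d d.lt_succ_self).symm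

/-! ### Factors of infinite words -/

/-- The factor `s i ⋯ s (j - 1)` of the infinite word `s`, which is empty if `j ≤ i`. -/
def factor (s : ℕ → A) (i j : ℕ) : List A :=
  (List.Ico i j).map s

variable {s t : ℕ → A} {i j k l : ℕ}

theorem length_factor (s : ℕ → A) (i j : ℕ) : (factor s i j).length = j - i := by
  rw [factor, List.length_map, List.Ico.length]

theorem factor_append_factor (s : ℕ → A) (hij : i ≤ j) (hjk : j ≤ k) :
    factor s i j ++ factor s j k = factor s i k := by
  rw [factor, factor, factor, ← List.map_append, List.Ico.append_consecutive hij hjk]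

theorem factor_shift (s : ℕ → A) (k i j : ℕ) :
    factor (shift k s) i j = factor s (i + k) (j + k) := by
  rw [factor, factor, ← List.Ico.map_add, List.map_map]
  rfl

theorem factor_eq_of_mem_cylinder (h : t ∈ cylinder s l) (hj : j ≤ l) :
    factor t i j = factor s i j :=
  List.map_congr_left fun _ hk => h _ ((List.Ico.mem.1 hk).2.trans_le hj)

theorem factor_isInfix_factor_zero (s : ℕ → A) (i j : ℕ) : factor s i j <:+: factor s 0 j := by
  obtain hij | hji := le_total i j
  · exact (factor_append_factor s i.zero_le hij) ▸ (List.suffix_append _ _).isInfix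
  · rw [factor, List.Ico.eq_nil_of_le hji]
    exact List.nil_infix

theorem factor_eq_append_cons (hs : shift i s ∈ cylinder s l) (hj : i + l < j) :
    factor s i j = factor s 0 l ++ s (i + l) :: factor s (i + l + 1) j := by
  have hprefix : factor s i (i + l) = factor s 0 l := by
    rw [← factor_eq_of_mem_cylinder hs le_rfl, factor_shift, zero_add, add_comm]
  have hcons : factor s (i + l) j = s (i + l) :: factor s (i + l + 1) j := by
    rw [factor, List.Ico.eq_cons hj, List.map_cons, factor]
  rw [← factor_append_factor s (Nat.le_add_right i l) hj.le, hprefix, hcons]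

theorem flatten_ofFn_factor (s : ℕ → A) {i : ℕ → ℕ} (hi : Monotone i) (n : ℕ) :
    (List.ofFn fun k : Fin n => factor s (i k) (i (k + 1))).flatten = factor s (i 0) (i n) := by
  induction n with
  | zero => simp [factor]
  | succ n ih =>
    rw [List.ofFn_succ', List.concat_eq_append, List.flatten_concat]
    simp only [Fin.val_castSucc, Fin.val_last]
    rw [ih, factor_append_factor s (hi n.zero_le) (hi n.le_succ)]

theorem isLocallyConstant_factor [TopologicalSpace A] [DiscreteTopology A] (i j : ℕ) :
    IsLocallyConstant fun s : ℕ → A => factor s i j :=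
  (IsLocallyConstant.iff_exists_open _).2 fun s =>
    ⟨cylinder s j, isOpen_cylinder (fun _ => A) s j, self_mem_cylinder s j,
      fun _ ht => factor_eq_of_mem_cylinder ht le_rfl⟩

theorem isClosed_setOf_factor_mem [TopologicalSpace A] [DiscreteTopology A] (F : Set (List A))
    (i j : ℕ) : IsClosed {s : ℕ → A | factor s i j ∈ F} :=
  ⟨isLocallyConstant_factor i j Fᶜ⟩

theorem exists_forall_factor_mem [Finite A] {F : Set (List A)}
    (hF : ∀ w ∈ F, ∀ v, v <:+: w → v ∈ F) (hlen : ∀ n, ∃ w ∈ F, w.length = n) :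
    ∃ s : ℕ → A, ∀ i j, factor s i j ∈ F := by
  let _ : TopologicalSpace A := ⊥
  have : DiscreteTopology A := ⟨rfl⟩
  let K : ℕ → Set (ℕ → A) := fun n => {s | factor s 0 n ∈ F}
  have hKclosed : ∀ n, IsClosed (K n) := isClosed_setOf_factor_mem F 0
  have hKanti : ∀ n, K (n + 1) ⊆ K n := fun n s hs =>
    hF _ hs _ (factor_append_factor s n.zero_le n.le_succ ▸ (List.prefix_append _ _).isInfix)
  have hKne : ∀ n, (K n).Nonempty := by
    intro n
    obtain ⟨w, hw, hwn⟩ := hlen (n + 1)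
    have hw0 : w ≠ [] := List.ne_nil_of_length_eq_add_one hwn
    have hprefix : factor (fun k => w.getD k (w.head hw0)) 0 n = w.take n := by
      refine List.ext_getElem (by simp [length_factor, hwn]) fun k hk hk' => ?_
      have hkw : k < w.length := hk'.trans_le (List.take_prefix n w).length_le
      simp [factor, List.Ico.zero_bot, hkw]
    exact ⟨_, hF w hw _ (hprefix ▸ (List.take_prefix n w).isInfix)⟩
  obtain ⟨s, hs⟩ := IsCompact.nonempty_iInter_of_sequence_nonempty_isCompact_isClosed K hKanti
    hKne (hKclosed 0).isCompact hKclosed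
  exact ⟨s, fun i j => hF _ (Set.mem_iInter.1 hs j) _ (factor_isInfix_factor_zero s i j)⟩

theorem exists_isRecurrent_lexMin [Finite A] [LinearOrder A] {F : Set (List A)}
    (hF : ∀ w ∈ F, ∀ v, v <:+: w → v ∈ F) (hlen : ∀ n, ∃ w ∈ F, w.length = n) :
    ∃ s : ℕ → A, (∀ i j, factor s i j ∈ F) ∧ IsRecurrent s ∧
      ∀ i, toLex s ≤ toLex (shift i s) := by
  let _ : TopologicalSpace A := ⊥
  have : DiscreteTopology A := ⟨rfl⟩
  let K : Set (ℕ → A) := {s | ∀ i j, factor s i j ∈ F}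
  have hK : IsClosed K := by
    simp only [K, Set.ofPred_forall]
    exact isClosed_iInter fun i => isClosed_iInter fun j => isClosed_setOf_factor_mem F i j
  have hKshift : Set.MapsTo (shift 1) K K := fun s hs i j => by
    rw [factor_shift]
    exact hs _ _
  obtain ⟨Y, hYK, hY⟩ := exists_isMinimalSet_subset hK (exists_forall_factor_mem hF hlen) hKshift
  obtain ⟨hYclosed, hYne, hYshift⟩ := hY.prop
  obtain ⟨s, hsY, hsmin⟩ := (lowerSemicontinuous_toLex.lowerSemicontinuousOn Y).exists_isMinOn
    hYne hYclosed.isCompact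
  refine ⟨s, hYK hsY, hY.isRecurrent hsY, fun i => hsmin ?_⟩
  rw [← shift_one_iterate]
  exact hYshift.iterate i hsY

/-! ### Divided words -/

/-- The word `u 0 ⋯ u (n - 1)` is divided by its factorization `u`: it is lexicographically larger
than every nontrivial rearrangement of the factors. This is the notion of an `n`-divided word, for
the reversed order of the letters. -/
def IsDivided [LT A] {n : ℕ} (u : Fin n → List A) : Prop :=
  ∀ σ : Equiv.Perm (Fin n), σ ≠ 1 → (List.ofFn fun i => u (σ i)).flatten < (List.ofFn u).flatten

theorem isDivided_of_forall_append_lt [LT A] {n : ℕ} {u : Fin n → List A}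
    (hu : ∀ j k, j < k → ∀ x y, u k ++ x < u j ++ y) : IsDivided u := by
  intro σ hσ
  obtain ⟨j, hj, r, hr⟩ := exists_ofFn_comp_perm_eq_append u hσ
  have hsplit : List.ofFn u = (List.ofFn u).take j ++ u j :: (List.ofFn u).drop (j + 1) := by
    conv_lhs =>
      rw [← List.take_append_drop j (List.ofFn u), ← List.getElem_cons_drop (by simp),
        List.getElem_ofFn]
  rw [hr]
  conv_rhs => rw [hsplit]
  simp only [List.flatten_append, List.flatten_cons]
  exact List.append_left_lt (hu j (σ j) hj _ _)

theorem exists_mem_cylinder_lt [LinearOrder A] (hle : toLex s ≤ toLex (shift i s))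
    (hne : shift i s ≠ s) : ∃ d, shift i s ∈ cylinder s d ∧ s d < s (i + d) := by
  obtain ⟨d, hagree, hlt⟩ := lt_of_le_of_ne hle fun h => hne (toLex.injective h).symm
  exact ⟨d, fun k hk => (hagree k hk).symm, hlt⟩

theorem IsRecurrent.exists_gt_mem_cylinder_lt [LinearOrder A] (hs : IsRecurrent s)
    (hmin : ∀ i, toLex s ≤ toLex (shift i s)) (hne : ∀ i, 0 < i → shift i s ≠ s) (N : ℕ) :
    ∃ i d, N < i ∧ N < d ∧ shift i s ∈ cylinder s d ∧ s d < s (i + d) := by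
  obtain ⟨i, hi, his⟩ := Filter.frequently_atTop.1 (hs (N + 1)) (N + 1)
  obtain ⟨d, hd, hlt⟩ := exists_mem_cylinder_lt (hmin i) (hne i (by omega))
  refine ⟨i, d, hi, not_le.1 fun hdN => hlt.ne' ?_, hd, hlt⟩
  exact his d (Nat.lt_succ_of_le hdN)

theorem isDivided_factor [LT A] {i d : ℕ → ℕ} (hd : StrictMono d)
    (hid : ∀ k, i k + d k < i (k + 1)) (hs : ∀ k, shift (i k) s ∈ cylinder s (d k))
    (hlt : ∀ k, s (d k) < s (i k + d k)) (n : ℕ) :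
    IsDivided fun k : Fin n => factor s (i k) (i (k + 1)) := by
  refine isDivided_of_forall_append_lt fun j k hjk x y => ?_
  have hdjk : d j < d k := hd hjk
  have hsk : shift (i k) s ∈ cylinder s (d j) := PiNat.cylinder_anti s hdjk.le (hs k)
  have hletter : s (i k + d j) = s (d j) := hs k (d j) hdjk
  rw [factor_eq_append_cons (hs j) (hid j),
    factor_eq_append_cons hsk ((Nat.add_lt_add_left hdjk _).trans (hid k)), hletter,
    List.append_assoc, List.append_assoc]
  exact List.append_left_lt (List.Lex.rel (hlt j))

theorem IsRecurrent.exists_isDivided [LinearOrder A] (hs : IsRecurrent s)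
    (hmin : ∀ i, toLex s ≤ toLex (shift i s)) (hne : ∀ i, 0 < i → shift i s ≠ s) (n : ℕ) :
    ∃ u : Fin n → List A, IsDivided u ∧ ∃ i j, (List.ofFn u).flatten = factor s i j := by
  obtain ⟨p, hp, hp_lt⟩ := exists_seq_of_forall_finset_exists
    (fun p : ℕ × ℕ => shift p.1 s ∈ cylinder s p.2 ∧ s p.2 < s (p.1 + p.2))
    (fun p q => p.1 + p.2 < q.1 ∧ p.2 < q.2) fun P _ => by
      obtain ⟨i, d, hi, hd, hid⟩ :=
        hs.exists_gt_mem_cylinder_lt hmin hne (P.sup fun p => p.1 + p.2)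
      have hle : ∀ p ∈ P, p.1 + p.2 ≤ P.sup fun p => p.1 + p.2 := fun p hp =>
        Finset.le_sup (f := fun p : ℕ × ℕ => p.1 + p.2) hp
      exact ⟨(i, d), hid, fun p hp => ⟨(hle p hp).trans_lt hi,
        (Nat.le_add_left _ _).trans_lt ((hle p hp).trans_lt hd)⟩⟩
  have hlt : ∀ k, (p k).1 + (p k).2 < (p (k + 1)).1 := fun k => (hp_lt k _ k.lt_succ_self).1
  have hmono : Monotone fun k => (p k).1 :=
    monotone_nat_of_le_succ fun k => (Nat.le_add_right _ _).trans (hlt k).le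
  exact ⟨_, isDivided_factor (fun j k hjk => (hp_lt j k hjk).2) hlt (fun k => (hp k).1)
    (fun k => (hp k).2) n, _, _, flatten_ofFn_factor s hmono n⟩

/-! ### Reduced words -/

section Reduced

variable {M : Type} [Monoid M] {φ : FreeMonoid A →* M} {v w : List A}

theorem lex_append_right_of_length_eq {r : A → A → Prop} :
    ∀ {u v : List A}, u.length = v.length → List.Lex r u v → ∀ y, List.Lex r (u ++ y) (v ++ y)
  | _, _, _, .rel h, _ => .rel h
  | _, _, hlen, .cons h, y => .cons (lex_append_right_of_length_eq (Nat.succ.inj hlen) h y)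

theorem shortlex_append_right {r : A → A → Prop} {u v : List A} (h : List.Shortlex r u v)
    (y : List A) : List.Shortlex r (u ++ y) (v ++ y) := by
  obtain hlt | ⟨hlen, hlex⟩ := List.shortlex_def.1 h
  · exact .of_length_lt (by simpa only [List.length_append, Nat.add_lt_add_iff_right] using hlt)
  · exact .of_lex (by rw [List.length_append, List.length_append, hlen])
      (lex_append_right_of_length_eq hlen hlex y)

/-- The word `w` is reduced: it is the shortlex-least word representing its image under `φ`. -/
def IsReducedWord [LT A] (φ : FreeMonoid A →* M) (w : List A) : Prop :=
  ∀ v, φ (.ofList v) = φ (.ofList w) → ¬ List.Shortlex (· < ·) v w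

theorem IsReducedWord.of_isInfix [LT A] (hw : IsReducedWord φ w) (hv : v <:+: w) :
    IsReducedWord φ v := by
  obtain ⟨x, y, rfl⟩ := hv
  intro u hu huv
  refine hw (x ++ u ++ y) ?_ (shortlex_append_right (huv.append_left x) y)
  simp only [FreeMonoid.ofList_append, map_mul, hu]

theorem exists_isReducedWord [LT A] [WellFoundedLT A] (φ : FreeMonoid A →* M) (w : List A) :
    ∃ v, IsReducedWord φ v ∧ φ (.ofList v) = φ (.ofList w) := by
  obtain ⟨v, hv, hmin⟩ := (List.Shortlex.wf (α := A) wellFounded_lt).has_min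
    {v | φ (.ofList v) = φ (.ofList w)} ⟨w, rfl⟩
  exact ⟨v, fun u hu => hmin u (hu.trans hv), hv⟩

theorem IsDivided.not_isReducedWord [LT A] {n : ℕ} {u : Fin n → List A} (hu : IsDivided u)
    (hn : NPermutable M n) : ¬ IsReducedWord φ (List.ofFn u).flatten := by
  intro hred
  obtain ⟨σ, hσ, hprod⟩ := hn fun i => φ (.ofList (u i))
  refine hred (List.ofFn fun i => u (σ i)).flatten ?_
    (.of_lex (Equiv.Perm.ofFn_comp_perm σ u).flatten.length_eq (hu σ hσ))
  simp only [FreeMonoid.ofList_flatten, map_list_prod, List.map_ofFn]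
  exact hprod.symm

theorem map_factor_zero_mul (φ : FreeMonoid A →* M) (hs : shift i s = s) (k : ℕ) :
    φ (.ofList (factor s 0 (k * i))) = φ (.ofList (factor s 0 i)) ^ k := by
  induction k with
  | zero => simp [factor]
  | succ k ih =>
    have hshift : factor s i (k * i + i) = factor s 0 (k * i) := by
      have hfactor := factor_shift s i 0 (k * i)
      rw [hs, zero_add] at hfactor
      exact hfactor.symm
    rw [Nat.succ_mul, ← factor_append_factor s i.zero_le (Nat.le_add_left _ _), hshift,
      FreeMonoid.ofList_append, map_mul, ih, pow_succ']

theorem exists_not_isReducedWord_factor [LT A] (hi : 0 < i) (hs : shift i s = s)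
    (hper : IsPeriodicElem (φ (.ofList (factor s 0 i)))) :
    ∃ j, ¬ IsReducedWord φ (factor s 0 j) := by
  obtain ⟨a, b, -, hab, hpow⟩ := hper
  refine ⟨b * i, fun hred => hred (factor s 0 (a * i)) ?_ (.of_length_lt ?_)⟩
  · rw [map_factor_zero_mul φ hs, map_factor_zero_mul φ hs, hpow]
  · simpa only [length_factor, Nat.sub_zero] using Nat.mul_lt_mul_of_pos_right hab hi

theorem exists_forall_isReducedWord_length_ne [Finite A] [LinearOrder A] (hperm : Permutable M)
    (hper : ∀ x : M, IsPeriodicElem x) (φ : FreeMonoid A →* M) :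
    ∃ N, ∀ w, IsReducedWord φ w → w.length ≠ N := by
  by_contra! hlong
  obtain ⟨n, -, hn⟩ := hperm
  obtain ⟨s, hred, hrec, hmin⟩ := exists_isRecurrent_lexMin (F := {w | IsReducedWord φ w})
    (fun _ hw _ hv => hw.of_isInfix hv) hlong
  by_cases hne : ∀ i, 0 < i → shift i s ≠ s
  · obtain ⟨u, hu, i, j, hij⟩ := hrec.exists_isDivided hmin hne n
    exact hu.not_isReducedWord (φ := φ) hn (hij ▸ hred i j)
  · push Not at hne
    obtain ⟨i, hi, hs⟩ := hne
    obtain ⟨j, hj⟩ := exists_not_isReducedWord_factor (φ := φ) hi hs (hper _)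
    exact hj (hred 0 j)

end Reduced

end Shift

theorem finite_of_permutable_of_isPeriodicElem {M : Type} [Monoid M] (hfg : Monoid.FG M)
    (hperm : Permutable M) (hper : ∀ x : M, IsPeriodicElem x) : Finite M := by
  obtain ⟨A, _, φ, hφ⟩ := Monoid.fg_iff_exists_freeGroup_hom_surjective_finite.1 hfg
  classical
  let _ : LinearOrder A := linearOrderOfSTO WellOrderingRel
  obtain ⟨N, hN⟩ := exists_forall_isReducedWord_length_ne hperm hper φ
  have hshort : ∀ w, IsReducedWord φ w → w.length < N := fun w hw => not_le.1 fun hNw =>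
    hN (w.take N) (hw.of_isInfix (List.take_prefix N w).isInfix) (List.length_take_of_le hNw)
  have hsurj : ∀ x, ∃ w ∈ {w : List A | w.length < N}, φ (.ofList w) = x := fun x => by
    obtain ⟨w, rfl⟩ := hφ x
    obtain ⟨v, hv, hvw⟩ := exists_isReducedWord φ w.toList
    exact ⟨v, hshort v hv, hvw⟩
  exact Set.finite_univ_iff.1 (((List.finite_length_lt A N).image _).subset fun x _ => hsurj x)

/-- Let `M` be a finitely generated inverse permutable monoid. Then
`𝔏_Rat(M)` equals the class of regular languages (over every alphabet) if and only if
every finitely generated subgroup of `M` is periodic. -/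
theorem LRat_eq_regular_iff_fg_subgroups_periodic
    (M : Type) [Monoid M] (hfg : Monoid.FG M) (hinv : IsInverseMonoid M)
    (hperm : Permutable M) :
    (∀ (α : Type) (L : Language α), L ∈ LRat α M ↔ L.IsRegular) ↔
      (∀ S : Subsemigroup M, IsSubgroupOfMonoid S → SubsemigroupFG S →
        ∀ x ∈ S, IsPeriodicElem x) := by
  refine ⟨fun h S hS _ x hx => ?_, fun h α L => ?_⟩
  · exact hS.isPeriodicElem_of_LRat_isRegular (fun L => (h Bool L).1) hx
  · have : Finite M := finite_of_permutable_of_isPeriodicElem hfg hperm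
      (hinv.isPeriodicElem_of_permutable hperm h)
    refine ⟨?_, mem_LRat_of_isRegular⟩
    rintro ⟨A, rfl⟩
    exact A.isRegular_lang
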